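/- Let G be a finite simple graph, let ε ∈ (0,1), let c ≥ 1/(1−ε) be real and d ≥ 1 an integer. Let 𝓗 be a probability distribution over subgraphs H of G such that: (1) with probability one, every vertex has degree at most d in H; (2) for every edge e of G with Pr[e ∉ H] > ε, the conditional expectation E[max_{v∈e} deg_H(v) | e ∉ H] is at least d/c. Then E[μ(H)] ≥ μ(G) / (2c(1 + 1/d)). -/

import Mathlib

/-!
Fix a maximum matching `M` of `G`. For a subgraph `H` call an edge `uv` of `M` worth `d` if it lies
in `H`, and `max (deg_H u) (deg_H v)` otherwise. The kernel condition, together with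
`c ≥ 1 / (1 - ε)`, says that each edge of `M` has expected worth at least `d / c`. It remains to see
that for every fixed `H` of maximum degree at most `d` the total worth is at most
`2 (d + 1) μ(H)` (`pairs_value_le`); averaging then gives the claim.

For that bound the Tutte–Berge formula is used (`tutte_berge`): there are a barrier `U` and a
partition of the remaining vertices into classes `C` without edges between them such that
`μ(H) = |U| + ∑ ⌊|C| / 2⌋`. Each `u ∈ U` gets weight `d` and hands one more unit to each neighbour
outside `U`; each class spreads `(d + 1) · 2⌊|C| / 2⌋` evenly over its vertices. A vertex outside
`U` then has weight at least its degree, because inside its class the degree is at most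
`min d (|C| - 1)`, and the ends of an edge of `H` have total weight at least `d`. So every pair is
worth at most the weight of its endpoints, while the total weight is at most `2 (d + 1) μ(H)`.

The Tutte–Berge formula is proved by induction on the vertex set. A vertex covered by all maximum
matchings is moved into the barrier. If there is none, Gallai's lemma (`gallai_trans`) makes "no
maximum matching misses both" an equivalence relation; adjacent vertices are equivalent, and a
maximum matching misses at most one vertex of each class, so the classes form the partition.
Matchings are handled as involutions of the vertex set.
-/

open Finset

/-- A matching in a graph `G`, given as a finite set of edges of `G` that are
pairwise vertex-disjoint. -/
def IsMatchingSet {V : Type*} (G : SimpleGraph V) (M : Finset (Sym2 V)) : Prop :=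
  (∀ e ∈ M, e ∈ G.edgeSet) ∧
  ∀ e ∈ M, ∀ f ∈ M, e ≠ f → ∀ v : V, v ∈ e → v ∉ f

/-- The matching number `μ(G)`: the maximum cardinality of a matching in `G`. -/
noncomputable def matchNum {V : Type*} (G : SimpleGraph V) : ℕ :=
  sSup {k | ∃ M : Finset (Sym2 V), IsMatchingSet G M ∧ M.card = k}

/-! ### Matchings as involutions and the Tutte–Berge formula -/

/-- A matching of `G` inside the vertex set `S`, encoded as the involution `f` exchanging the
endpoints of each matching edge and fixing all unmatched vertices. -/
def IsInvMatching {V : Type*} (G : SimpleGraph V) (S : Finset V) (f : V → V) : Prop :=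
  (∀ v, f (f v) = v) ∧ (∀ v, f v ≠ v → G.Adj v (f v)) ∧ (∀ v, f v ≠ v → v ∈ S)

/-- The vertices covered by the matching encoded by the involution `f`. -/
def coveredBy {V : Type*} [Fintype V] [DecidableEq V] (f : V → V) : Finset V :=
  univ.filter (fun v => f v ≠ v)

/-- A maximum matching of `G` inside `S`, encoded as an involution. -/
def IsMaxInv {V : Type*} [Fintype V] [DecidableEq V] (G : SimpleGraph V) (S : Finset V)
    (f : V → V) : Prop :=
  IsInvMatching G S f ∧
    ∀ g, IsInvMatching G S g → (coveredBy g).card ≤ (coveredBy f).card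

/-- The involution `f` pairs off the elements of `s`. -/
lemma even_card_of_involution {V : Type*} (s : Finset V) (f : V → V) (hs : ∀ v ∈ s, f v ∈ s)
    (hf : ∀ v, f (f v) = v) (hne : ∀ v ∈ s, f v ≠ v) : Even s.card := by
  have h : ∑ _v ∈ s, (1 : ZMod 2) = 0 :=
    Finset.sum_involution (fun v _ => f v) (fun _ _ => by decide) (fun v hv _ => hne v hv)
      (fun v hv => hs v hv) (fun v _ => hf v)
  rw [Finset.sum_const, nsmul_eq_mul, mul_one] at h
  exact (ZMod.natCast_eq_zero_iff_even).1 h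

section Berge

variable {V : Type*} [Fintype V] [DecidableEq V] {G : SimpleGraph V}

lemma mem_coveredBy {f : V → V} {v : V} : v ∈ coveredBy f ↔ f v ≠ v := by
  simp [coveredBy]

lemma exists_isMaxInv (G : SimpleGraph V) (S : Finset V) : ∃ f, IsMaxInv G S f := by
  classical
  obtain ⟨f, hf, hmax⟩ := Finset.exists_max_image
    (univ.filter (fun f : V → V => IsInvMatching G S f)) (fun f => (coveredBy f).card)
    ⟨id, Finset.mem_filter.2 ⟨Finset.mem_univ _, by simp [IsInvMatching]⟩⟩
  simp only [mem_filter, mem_univ, true_and] at hf hmax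
  exact ⟨f, hf, hmax⟩

lemma even_card_coveredBy {S : Finset V} {f : V → V} (hf : IsInvMatching G S f) :
    Even (coveredBy f).card := by
  refine even_card_of_involution _ f (fun v hv => ?_) hf.1 (fun v hv => mem_coveredBy.1 hv)
  rw [mem_coveredBy] at hv ⊢
  rw [hf.1]
  exact hv.symm

/-- A maximum matching cannot miss both ends of an edge. -/
lemma IsMaxInv.not_both_missed {S : Finset V} {f : V → V} (hf : IsMaxInv G S f) {x y : V}
    (hx : x ∈ S) (hy : y ∈ S) (hxy : G.Adj x y) (hfx : f x = x) (hfy : f y = y) : False := by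
  have hne : x ≠ y := hxy.ne
  have hyx := hxy.symm
  obtain ⟨⟨h1, h2, h3⟩, hmax⟩ := hf
  let g : V → V := fun t => if t = x then y else if t = y then x else f t
  have hg : IsInvMatching G S g := by
    refine ⟨fun t => ?_, fun t => ?_, fun t => ?_⟩ <;> have := h1 t <;> simp only [g] <;> grind
  have hlt : (coveredBy f).card < (coveredBy g).card := by
    apply Finset.card_lt_card
    rw [Finset.ssubset_iff_of_subset]
    · exact ⟨x, by rw [mem_coveredBy]; simp [g, hne.symm], by rw [mem_coveredBy]; simp [hfx]⟩
    · intro t ht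
      rw [mem_coveredBy] at ht ⊢
      simp only [g]
      grind
  exact absurd (hmax g hg) (by omega)

/-- Gallai's lemma: "no maximum matching misses both" is transitive through a vertex `v` that some
maximum matching misses. The witness `N` missing `v` is chosen to agree as much as possible with
`M`; rotating `N` along one edge of `M` would increase the agreement. -/
lemma gallai_trans {S : Finset V} {u v w : V} (huw : u ≠ w)
    (hv : ∃ N, IsMaxInv G S N ∧ N v = v)
    (huv : ∀ N, IsMaxInv G S N → N u = u → N v ≠ v)
    (hvw : ∀ N, IsMaxInv G S N → N v = v → N w ≠ w)
    (M : V → V) (hM : IsMaxInv G S M) (hMu : M u = u) : M w ≠ w := by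
  classical
  intro hMw
  obtain ⟨N, hN, hbest⟩ := Finset.exists_max_image
    (univ.filter (fun N : V → V => IsMaxInv G S N ∧ N v = v))
    (fun N => (univ.filter (fun t => M t = N t)).card) (by simpa [Finset.Nonempty] using hv)
  simp only [mem_filter, mem_univ, true_and] at hN hbest
  obtain ⟨hN, hNv⟩ := hN
  have hNu : N u ≠ u := fun h => huv N hN h hNv
  have hNw : N w ≠ w := hvw N hN hNv
  have hcard : (coveredBy M).card = (coveredBy N).card := le_antisymm (hN.2 _ hM.1) (hM.2 _ hN.1)
  have h2 : 1 < (coveredBy M \ coveredBy N).card := by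
    rw [Finset.card_sdiff_comm hcard, Finset.one_lt_card]
    refine ⟨u, ?_, w, ?_, huw⟩ <;> simp [mem_coveredBy, *]
  obtain ⟨x, hx, hxv⟩ := Finset.exists_mem_ne h2 v
  simp only [mem_sdiff, mem_coveredBy, not_not] at hx
  obtain ⟨hMx, hNx⟩ := hx
  obtain ⟨⟨m1, m2, m3⟩, mmax⟩ := hM
  have hxy : G.Adj x (M x) := m2 x hMx
  have hxS : x ∈ S := m3 x hMx
  have hyS : M x ∈ S := m3 _ (by rw [m1]; exact hMx.symm)
  have hMy : M (M x) = x := m1 x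
  have hNy : N (M x) ≠ M x := fun h => hN.not_both_missed hxS hyS hxy hNx h
  generalize M x = y at *
  have hyx := hxy.symm
  obtain ⟨⟨n1, n2, n3⟩, nmax⟩ := hN
  have hNz : N (N y) = y := n1 y
  have hzx : N y ≠ x := by grind
  generalize hz : N y = z at *
  let g : V → V := fun t => if t = x then y else if t = y then x else if t = z then z else N t
  have hg : IsInvMatching G S g := by
    refine ⟨fun t => ?_, fun t => ?_, fun t => ?_⟩ <;> have := n1 t <;> simp only [g] <;> grind
  have hgc : (coveredBy N).card ≤ (coveredBy g).card := by
    have hsub : insert x ((coveredBy N).erase z) ⊆ coveredBy g := by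
      intro t ht
      simp only [mem_insert, mem_erase, mem_coveredBy] at ht ⊢
      simp only [g]
      grind
    have hc := Finset.card_le_card hsub
    rw [Finset.card_insert_of_notMem (by simp [mem_coveredBy, hNx]),
      Finset.card_erase_of_mem (by rw [mem_coveredBy]; grind)] at hc
    omega
  have hgv : g v = v := by simp only [g]; grind
  have hgb := hbest g ⟨⟨hg, fun k hk => (nmax k hk).trans hgc⟩, hgv⟩
  refine absurd hgb (not_le.2 (Finset.card_lt_card ?_))
  rw [Finset.ssubset_iff_of_subset]
  · refine ⟨x, ?_, ?_⟩ <;> simp [g] <;> grind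
  · intro t ht
    simp only [mem_filter, mem_univ, true_and] at ht ⊢
    simp only [g]
    grind

/-- Tutte–Berge formula, hard direction: a matching inside `S`, a barrier `U` and a labelling `r`
of `S \ U`, constant along edges, such that the matching is at least as large as the bound given by
`U` and the label classes. -/
lemma tutte_berge (G : SimpleGraph V) (S : Finset V) :
    ∃ (f : V → V) (U : Finset V) (r : V → Finset V), IsInvMatching G S f ∧ U ⊆ S ∧
      (∀ a ∈ S \ U, ∀ b ∈ S \ U, G.Adj a b → r a = r b) ∧
      2 * U.card + ∑ l, 2 * (((S \ U).filter (fun a => r a = l)).card / 2)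
        ≤ (coveredBy f).card := by
  classical
  induction hn : S.card generalizing S with
  | zero =>
    obtain rfl := Finset.card_eq_zero.1 hn
    exact ⟨id, ∅, fun _ => ∅, by simp [IsInvMatching], by simp, by simp, by simp⟩
  | succ n ih =>
    obtain ⟨f, hf⟩ := exists_isMaxInv G S
    by_cases hess : ∃ v ∈ S, ∀ N, IsMaxInv G S N → N v ≠ v
    · -- An essential vertex joins the barrier, and the matching number drops upon deleting it.
      obtain ⟨v, hvS, hv⟩ := hess
      obtain ⟨f', U, r, hf', hU, hr, hle⟩ := ih (S.erase v) (by
        rw [Finset.card_erase_of_mem hvS, hn]; rfl)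
      have hvU : v ∉ U := fun h => by simpa using hU h
      have hS : S \ insert v U = S.erase v \ U := by
        ext t; simp only [mem_sdiff, mem_insert, mem_erase]; tauto
      have hf'S : IsInvMatching G S f' :=
        ⟨hf'.1, hf'.2.1, fun t ht => Finset.mem_of_mem_erase (hf'.2.2 t ht)⟩
      have hf'v : f' v = v := by
        by_contra h
        simpa using hf'.2.2 v h
      have hlt : (coveredBy f').card < (coveredBy f).card := by
        by_contra! h
        exact hv f' ⟨hf'S, fun g hg => (hf.2 g hg).trans h⟩ hf'v
      refine ⟨f, insert v U, r, hf.1, ?_, ?_, ?_⟩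
      · exact Finset.insert_subset hvS (hU.trans (Finset.erase_subset _ _))
      · rw [hS]; exact hr
      · rw [hS, Finset.card_insert_of_notMem hvU]
        have e1 := even_card_coveredBy hf.1
        have e2 := even_card_coveredBy hf'S
        grind
    · -- Otherwise the classes of Gallai's relation serve as labels, with empty barrier.
      push Not at hess
      let R : V → V → Prop := fun a b => a = b ∨ ∀ N, IsMaxInv G S N → N a = a → N b ≠ b
      have Rsymm : ∀ a b, R a b → R b a := by
        rintro a b (h | h)
        · exact Or.inl h.symm
        · exact Or.inr fun N hN hb ha => h N hN ha hb
      have Rtrans : ∀ a b c, b ∈ S → R a b → R b c → R a c := by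
        rintro a b c hb (rfl | h1) (rfl | h2)
        · exact Or.inl rfl
        · exact Or.inr h2
        · exact Or.inr h1
        · by_cases hac : a = c
          · exact Or.inl hac
          · exact Or.inr (gallai_trans hac (hess b hb) h1 h2)
      let r : V → Finset V := fun a => S.filter (fun b => R a b)
      have hr1 : ∀ a ∈ S, ∀ b ∈ S, R a b → r a = r b := by
        intro a ha b hb hab
        ext t
        simp only [r, mem_filter]
        exact and_congr_right fun ht =>
          ⟨Rtrans b a t ha (Rsymm _ _ hab), Rtrans a b t hb hab⟩
      have hr2 : ∀ a ∈ S, ∀ b ∈ S, r a = r b → R a b := by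
        intro a ha b hb hab
        have : b ∈ r b := by simp [r, hb, R]
        rw [← hab] at this
        exact (mem_filter.1 this).2
      have hadj : ∀ a ∈ S, ∀ b ∈ S, G.Adj a b → r a = r b := fun a ha b hb hab =>
        hr1 a ha b hb (Or.inr fun N hN h1 h2 => hN.not_both_missed ha hb hab h1 h2)
      refine ⟨f, ∅, r, hf.1, by simp, by simpa using hadj, ?_⟩
      have hcov : (coveredBy f).card
          = ∑ l, ((coveredBy f).filter (fun a => r a = l)).card :=
        Finset.card_eq_sum_card_fiberwise (fun _ _ => by simp)
      rw [hcov, Finset.card_empty, mul_zero, zero_add, Finset.sdiff_empty]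
      refine Finset.sum_le_sum fun l _ => ?_
      have hfS : ∀ t, f t ≠ t → f t ∈ S := fun t ht =>
        hf.1.2.2 _ (by rw [hf.1.1]; exact ht.symm)
      have heven : Even ((coveredBy f).filter (fun a => r a = l)).card := by
        refine even_card_of_involution _ f ?_ hf.1.1 ?_
        · intro t ht
          simp only [mem_filter, mem_coveredBy] at ht ⊢
          refine ⟨by rw [hf.1.1]; exact ht.1.symm, ?_⟩
          rw [← ht.2]
          exact (hadj t (hf.1.2.2 t ht.1) _ (hfS t ht.1) (hf.1.2.1 t ht.1)).symm
        · intro t ht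
          exact mem_coveredBy.1 (mem_filter.1 ht).1
      have hmiss : (S.filter (fun a => r a = l)).card
          ≤ ((coveredBy f).filter (fun a => r a = l)).card + 1 := by
        have h1 : ((S.filter (fun a => r a = l)).filter (fun a => ¬ f a ≠ a)).card ≤ 1 := by
          rw [Finset.card_le_one]
          intro a ha b hb
          simp only [mem_filter, not_not] at ha hb
          rcases hr2 a ha.1.1 b hb.1.1 (ha.1.2.trans hb.1.2.symm) with h | h
          · exact h
          · exact absurd hb.2 (h f hf ha.2)
        have h2 : ((S.filter (fun a => r a = l)).filter (fun a => f a ≠ a)).card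
            ≤ ((coveredBy f).filter (fun a => r a = l)).card := by
          apply Finset.card_le_card
          intro t ht
          simp only [mem_filter, mem_coveredBy] at ht ⊢
          exact ⟨ht.2, ht.1.2⟩
        have h3 := Finset.card_filter_add_card_filter_not (s := S.filter (fun a => r a = l))
          (fun a => f a ≠ a)
        omega
      obtain ⟨k, hk⟩ := heven
      omega

/-- The edge set of the matching encoded by `f` has half as many elements as there are covered
vertices. -/
lemma coveredBy_card_le (G : SimpleGraph V) {S : Finset V} {f : V → V}
    (hf : IsInvMatching G S f) : (coveredBy f).card ≤ 2 * matchNum G := by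
  classical
  set M : Finset (Sym2 V) := (coveredBy f).image (fun v => s(v, f v)) with hMdef
  have hM : IsMatchingSet G M := by
    constructor
    · intro e he
      obtain ⟨v, hv, rfl⟩ := Finset.mem_image.1 he
      exact hf.2.1 v (mem_coveredBy.1 hv)
    · intro e he e' he' hne v hv hv'
      obtain ⟨a, ha, rfl⟩ := Finset.mem_image.1 he
      obtain ⟨b, hb, rfl⟩ := Finset.mem_image.1 he'
      have h1 := hf.1 a
      have h2 := hf.1 b
      apply hne
      rw [Sym2.mem_iff] at hv hv'
      rw [Sym2.eq_iff]
      grind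
  have h1 : M.card ≤ matchNum G := by
    refine le_csSup ⟨Fintype.card (Sym2 V), ?_⟩ ⟨M, hM, rfl⟩
    rintro k ⟨M', -, rfl⟩
    exact Finset.card_le_univ _
  have h2 : (coveredBy f).card ≤ 2 * M.card := by
    refine Finset.card_le_mul_card_image _ 2 fun e he => ?_
    obtain ⟨v, hv, rfl⟩ := Finset.mem_image.1 he
    refine (Finset.card_le_card (t := {v, f v}) ?_).trans Finset.card_le_two
    intro t ht
    simp only [mem_filter, Sym2.eq_iff, mem_insert, mem_singleton] at ht ⊢
    tauto
  omega

end Berge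

/-! ### Weights bounding the worth of a set of disjoint pairs -/

/-- Arithmetic core of the weighting: `x` bounds a degree inside a class of `n` vertices, hence
`x ≤ min d (n - 1)`. -/
lemma mul_le_even_part (x d n : ℕ) (hxd : x ≤ d) (hxn : x + 1 ≤ n) :
    x * n ≤ (d + 1) * (2 * (n / 2)) := by
  rcases Nat.even_or_odd' n with ⟨k, rfl | rfl⟩
  · rw [Nat.mul_div_cancel_left k (by norm_num)]
    exact Nat.mul_le_mul_right _ (by omega)
  · have : (2 * k + 1) / 2 = k := by omega
    rw [this]
    nlinarith

/-- Let `H` have maximum degree at most `d`, and let `M` be a set of pairwise disjoint pairs of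
distinct vertices, not necessarily edges of `H`. A pair is worth `d` if it is an edge of `H`, and
the larger `H`-degree of its endpoints otherwise. The total value is at most `2 (d + 1) μ(H)`: the
Tutte–Berge bound, times `d + 1`, can be distributed over the vertices so that the endpoints of
each pair receive at least its value. The functions `a` and `b` choose the endpoints of a pair. -/
lemma pairs_value_le {V : Type*} [Fintype V] [DecidableEq V] (H : SimpleGraph V)
    [DecidableRel H.Adj] (d : ℕ) (hdeg : ∀ v, H.degree v ≤ d)
    (M : Finset (Sym2 V)) (a b : Sym2 V → V) (hab : ∀ e, s(a e, b e) = e)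
    (hne : ∀ e ∈ M, a e ≠ b e)
    (hdisj : ∀ e ∈ M, ∀ f ∈ M, e ≠ f → ∀ v : V, v ∈ e → v ∉ f) :
    ∑ e ∈ M, (if H.Adj (a e) (b e) then (d : ℝ)
        else ((max (H.degree (a e)) (H.degree (b e)) : ℕ) : ℝ))
      ≤ 2 * ((d : ℝ) + 1) * (matchNum H : ℝ) := by
  classical
  obtain ⟨f, U, r, hf, -, hr, hle⟩ := tutte_berge H univ
  have hle2 := hle.trans (coveredBy_card_le H hf)
  set C : Finset V → Finset V := fun l => (univ \ U).filter (fun v => r v = l) with hC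
  have hmemC : ∀ v, v ∉ U → v ∈ C (r v) := fun v hv => by simp [hC, hv]
  -- The bound `(d + 1) * 2 * ⌊|C| / 2⌋` of each class is spread evenly over its vertices.
  let s : V → ℝ := fun v =>
    ((d : ℝ) + 1) * ((2 * ((C (r v)).card / 2) : ℕ) : ℝ) / ((C (r v)).card : ℝ)
  have hs0 : ∀ v, 0 ≤ s v := fun v => by positivity
  let eU : V → ℕ := fun v => (U.filter (fun u => H.Adj v u)).card
  -- Every vertex of `U` also passes one unit to each of its at most `d` neighbours outside `U`.
  let t : V → ℝ := fun v => if v ∈ U then (d : ℝ) else (eU v : ℝ) + s v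
  have ht0 : ∀ v, 0 ≤ t v := fun v => by
    simp only [t]; split_ifs
    · positivity
    · have := hs0 v; positivity
  have hs : ∀ v, v ∉ U → ∀ x : ℕ, x ≤ d → x + 1 ≤ (C (r v)).card → (x : ℝ) ≤ s v := by
    intro v hv x h1 h2
    have hpos : (0 : ℝ) < ((C (r v)).card : ℝ) := by
      exact_mod_cast (by omega : 0 < (C (r v)).card)
    simp only [s]
    rw [le_div_iff₀ hpos]
    exact_mod_cast mul_le_even_part x d _ h1 h2
  have hnbr : ∀ v, v ∉ U → (H.degree v : ℝ) ≤ t v := by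
    intro v hv
    simp only [t, if_neg hv]
    set D := (univ \ U).filter (fun u => H.Adj v u) with hD
    have hdegsplit : H.degree v = eU v + D.card := by
      rw [← SimpleGraph.card_neighborFinset_eq_degree]
      rw [← Finset.card_filter_add_card_filter_not (s := H.neighborFinset v) (fun u => u ∈ U)]
      congr 2 <;> ext u <;> simp [hD, and_comm]
    have hDC : D.card + 1 ≤ (C (r v)).card := by
      have hsub : insert v D ⊆ C (r v) := by
        intro u hu
        rcases Finset.mem_insert.1 hu with rfl | hu
        · exact hmemC _ hv
        · rw [hD, Finset.mem_filter] at hu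
          rw [hC]
          exact Finset.mem_filter.2
            ⟨hu.1, (hr v (by simp [hv]) u hu.1 hu.2).symm⟩
      have := Finset.card_le_card hsub
      rwa [Finset.card_insert_of_notMem (by simp [hD])] at this
    have := hs v hv D.card (by have := hdeg v; omega) hDC
    rw [hdegsplit]
    push_cast
    linarith
  have hval : ∀ u v, u ≠ v → (if H.Adj u v then (d : ℝ)
      else ((max (H.degree u) (H.degree v) : ℕ) : ℝ)) ≤ t u + t v := by
    intro u v huv
    have hu0 := ht0 u
    have hv0 := ht0 v
    have hled : (if H.Adj u v then (d : ℝ)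
        else ((max (H.degree u) (H.degree v) : ℕ) : ℝ)) ≤ d := by
      split_ifs
      · exact le_rfl
      · exact_mod_cast max_le (hdeg u) (hdeg v)
    by_cases hu : u ∈ U
    · have : t u = d := if_pos hu
      linarith
    by_cases hv : v ∈ U
    · have : t v = d := if_pos hv
      linarith
    split_ifs with hadj
    · have hrr : r u = r v := hr u (by simp [hu]) v (by simp [hv]) hadj
      have htu : s u ≤ t u := by
        simp only [t, if_neg hu]; linarith [(Nat.cast_nonneg (eU u) : (0 : ℝ) ≤ _)]
      have htv : s v ≤ t v := by
        simp only [t, if_neg hv]; linarith [(Nat.cast_nonneg (eU v) : (0 : ℝ) ≤ _)]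
      have hsuv : s u = s v := by simp only [s, hrr]
      have hn : 2 ≤ (C (r u)).card := by
        refine Finset.one_lt_card.2 ⟨u, hmemC u hu, v, ?_, huv⟩
        rw [hrr]; exact hmemC v hv
      have hpos : (0 : ℝ) < ((C (r u)).card : ℝ) := by
        exact_mod_cast (by omega : 0 < (C (r u)).card)
      have h2 : (d : ℝ) / 2 ≤ s u := by
        simp only [s]
        rw [le_div_iff₀ hpos]
        -- A class with `n ≥ 2` vertices satisfies `n ≤ 2 * (2 * ⌊n / 2⌋)`.
        have h3 : ((C (r u)).card : ℝ) ≤ 2 * ((2 * ((C (r u)).card / 2) : ℕ) : ℝ) := by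
          exact_mod_cast (by omega : (C (r u)).card ≤ 2 * (2 * ((C (r u)).card / 2)))
        have hd0 : (0 : ℝ) ≤ d := Nat.cast_nonneg d
        nlinarith [mul_le_mul_of_nonneg_left h3 hd0]
      linarith
    · rw [Nat.cast_max]
      exact max_le (by linarith [hnbr u hu]) (by linarith [hnbr v hv])
  have hstep1 : ∑ e ∈ M, (if H.Adj (a e) (b e) then (d : ℝ)
      else ((max (H.degree (a e)) (H.degree (b e)) : ℕ) : ℝ)) ≤ ∑ v, t v := by
    calc _ ≤ ∑ e ∈ M, ∑ v ∈ ({a e, b e} : Finset V), t v := by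
          refine Finset.sum_le_sum fun e he => ?_
          rw [Finset.sum_pair (hne e he)]
          exact hval _ _ (hne e he)
      _ = ∑ v ∈ M.biUnion (fun e => ({a e, b e} : Finset V)), t v := by
          rw [Finset.sum_biUnion]
          intro e he e' he' hee
          rw [Function.onFun, Finset.disjoint_left]
          intro v hv hv'
          refine hdisj e he e' he' hee v ?_ ?_
          · rw [← hab e]; simpa using hv
          · rw [← hab e']; simpa using hv'
      _ ≤ ∑ v, t v :=
          Finset.sum_le_sum_of_subset_of_nonneg (Finset.subset_univ _) fun v _ _ => ht0 v
  have hcross : ∑ v ∈ univ \ U, eU v ≤ d * U.card := by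
    have h1 : ∑ v ∈ univ \ U, eU v
        = ∑ u ∈ U, ((univ \ U).filter (fun v => H.Adj v u)).card :=
      Finset.sum_card_bipartiteAbove_eq_sum_card_bipartiteBelow (fun v u => H.Adj v u)
    rw [h1, mul_comm, ← smul_eq_mul]
    refine Finset.sum_le_card_nsmul _ _ _ fun u _ => le_trans ?_ (hdeg u)
    rw [← SimpleGraph.card_neighborFinset_eq_degree]
    apply Finset.card_le_card
    intro v hv
    simpa using (Finset.mem_filter.1 hv).2.symm
  have hssum : ∑ v ∈ univ \ U, s v
      ≤ ∑ l, ((d : ℝ) + 1) * ((2 * ((C l).card / 2) : ℕ) : ℝ) := by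
    rw [← Finset.sum_fiberwise (univ \ U) r s]
    refine Finset.sum_le_sum fun l _ => ?_
    have hc : ∀ v ∈ (univ \ U).filter (fun v => r v = l), s v
        = ((d : ℝ) + 1) * ((2 * ((C l).card / 2) : ℕ) : ℝ) / ((C l).card : ℝ) := by
      intro v hv
      simp only [s, (Finset.mem_filter.1 hv).2]
    rw [Finset.sum_congr rfl hc, Finset.sum_const, nsmul_eq_mul]
    -- An empty class carries no weight.
    rcases Nat.eq_zero_or_pos (C l).card with h0 | h0
    · simp [h0]
    · have hpos : (0 : ℝ) < ((C l).card : ℝ) := by exact_mod_cast h0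
      exact (mul_div_cancel₀ _ hpos.ne').le
  have htsum : ∑ v, t v = d * (U.card : ℝ) + ((∑ v ∈ univ \ U, eU v : ℕ) : ℝ)
      + ∑ v ∈ univ \ U, s v := by
    rw [← Finset.sum_sdiff (Finset.subset_univ U)]
    have h1 : ∑ v ∈ U, t v = d * (U.card : ℝ) := by
      rw [Finset.sum_congr rfl (fun v hv => (if_pos hv : t v = d)), Finset.sum_const,
        nsmul_eq_mul, mul_comm]
    have h2 : ∑ v ∈ univ \ U, t v = ∑ v ∈ univ \ U, ((eU v : ℝ) + s v) :=
      Finset.sum_congr rfl fun v hv => if_neg (Finset.mem_sdiff.1 hv).2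
    rw [h1, h2, Finset.sum_add_distrib]
    push_cast
    ring
  have hcross' : ((∑ v ∈ univ \ U, eU v : ℕ) : ℝ) ≤ d * (U.card : ℝ) := by exact_mod_cast hcross
  have hle3 : 2 * (U.card : ℝ) + ∑ l, ((2 * ((C l).card / 2) : ℕ) : ℝ)
      ≤ 2 * (matchNum H : ℝ) := by exact_mod_cast hle2
  rw [← Finset.mul_sum] at hssum
  have hU0 : (0 : ℝ) ≤ U.card := Nat.cast_nonneg _
  have hd0 : (0 : ℝ) ≤ d := Nat.cast_nonneg d
  have hfin := mul_le_mul_of_nonneg_left hle3 (by positivity : (0 : ℝ) ≤ d + 1)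
  nlinarith

/-! ### Averaging over the distribution -/

lemma exists_max_matching {V : Type*} [Fintype V] (G : SimpleGraph V) :
    ∃ M : Finset (Sym2 V), IsMatchingSet G M ∧ M.card = matchNum G := by
  classical
  have hne : {k | ∃ M : Finset (Sym2 V), IsMatchingSet G M ∧ M.card = k}.Nonempty :=
    ⟨0, ∅, by simp [IsMatchingSet], by simp⟩
  refine Nat.sSup_mem hne ⟨Fintype.card (Sym2 V), ?_⟩
  rintro k ⟨M', -, rfl⟩
  exact Finset.card_le_univ _

/-- Randomized kernel lemma (Lemma 4.3): a `(c,d,ε)`-kernel distribution `𝓗`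
(modelled by a finite probability space `(Ω, p)` and a subgraph-valued random
variable `H`) satisfies `E[μ(H)] ≥ μ(G)/(2c(1+1/d))`. Condition (2), that
`E[max_{v ∈ e} deg_H(v) ∣ e ∉ H] ≥ d/c` whenever `Pr[e ∉ H] > ε`, is stated in
the equivalent product form avoiding division by `Pr[e ∉ H]`. -/
theorem randomized_kernel_approx {V : Type*} [Fintype V] [DecidableEq V]
    (G : SimpleGraph V) (ε : ℝ) (hε0 : 0 < ε) (hε1 : ε < 1)
    (c : ℝ) (hc : 1 / (1 - ε) ≤ c) (d : ℕ) (hd : 1 ≤ d)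
    {Ω : Type*} [Fintype Ω] (p : Ω → ℝ)
    (hp0 : ∀ ω, 0 ≤ p ω) (hp1 : ∑ ω, p ω = 1)
    (H : Ω → SimpleGraph V) [∀ ω, DecidableRel (H ω).Adj]
    (hsub : ∀ ω, H ω ≤ G)
    (hdeg : ∀ ω v, (H ω).degree v ≤ d)
    (hker : ∀ u v : V, G.Adj u v →
      ε < ∑ ω ∈ univ.filter (fun ω => ¬(H ω).Adj u v), p ω →
      ((d : ℝ) / c) * ∑ ω ∈ univ.filter (fun ω => ¬(H ω).Adj u v), p ω ≤
        ∑ ω ∈ univ.filter (fun ω => ¬(H ω).Adj u v),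
          p ω * ((max ((H ω).degree u) ((H ω).degree v) : ℕ) : ℝ)) :
    (matchNum G : ℝ) / (2 * c * (1 + 1 / (d : ℝ))) ≤
      ∑ ω, p ω * (matchNum (H ω) : ℝ) := by
  classical
  obtain ⟨M, hM, hMcard⟩ := exists_max_matching G
  set a : Sym2 V → V := fun e => (Quot.out e).1 with ha
  set b : Sym2 V → V := fun e => (Quot.out e).2 with hb
  have hab : ∀ e, s(a e, b e) = e := fun e => Quot.out_eq e
  have hadj : ∀ e ∈ M, G.Adj (a e) (b e) := fun e he => by
    have := hM.1 e he
    rwa [← hab e] at this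
  have hd0 : (1 : ℝ) ≤ d := by exact_mod_cast hd
  have h1ε : 0 < 1 - ε := by linarith
  have hc1 : 1 ≤ c := le_trans (by rw [le_div_iff₀ h1ε]; linarith) hc
  have hc0 : 0 < c := by linarith
  have hcε : 1 / c ≤ 1 - ε := by
    rw [div_le_iff₀ h1ε] at hc
    rw [div_le_iff₀ hc0]
    linarith
  let val : Ω → Sym2 V → ℝ := fun ω e => if (H ω).Adj (a e) (b e) then (d : ℝ)
    else ((max ((H ω).degree (a e)) ((H ω).degree (b e)) : ℕ) : ℝ)
  have hval : ∀ ω, ∑ e ∈ M, val ω e ≤ 2 * ((d : ℝ) + 1) * (matchNum (H ω) : ℝ) := fun ω =>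
    pairs_value_le (H ω) d (hdeg ω) M a b hab (fun e he => (hadj e he).ne) hM.2
  -- Every edge of the optimal matching has expected value at least `d / c`.
  have hexp : ∀ e ∈ M, (d : ℝ) / c ≤ ∑ ω, p ω * val ω e := by
    intro e he
    have hker' := hker (a e) (b e) (hadj e he)
    have hprob := Finset.sum_filter_add_sum_filter_not univ
      (fun ω => (H ω).Adj (a e) (b e)) p
    have hsplit := Finset.sum_filter_add_sum_filter_not univ
      (fun ω => (H ω).Adj (a e) (b e)) (fun ω => p ω * val ω e)
    have hin : ∑ ω ∈ univ.filter (fun ω => (H ω).Adj (a e) (b e)), p ω * val ω e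
        = (∑ ω ∈ univ.filter (fun ω => (H ω).Adj (a e) (b e)), p ω) * d := by
      rw [Finset.sum_mul]
      exact Finset.sum_congr rfl fun ω hω => by simp only [val, if_pos (Finset.mem_filter.1 hω).2]
    have hout : ∑ ω ∈ univ.filter (fun ω => ¬(H ω).Adj (a e) (b e)), p ω * val ω e
        = ∑ ω ∈ univ.filter (fun ω => ¬(H ω).Adj (a e) (b e)),
          p ω * ((max ((H ω).degree (a e)) ((H ω).degree (b e)) : ℕ) : ℝ) :=
      Finset.sum_congr rfl fun ω hω => by simp only [val, if_neg (Finset.mem_filter.1 hω).2]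
    have hout0 : 0 ≤ ∑ ω ∈ univ.filter (fun ω => ¬(H ω).Adj (a e) (b e)),
        p ω * ((max ((H ω).degree (a e)) ((H ω).degree (b e)) : ℕ) : ℝ) :=
      Finset.sum_nonneg fun ω _ => mul_nonneg (hp0 ω) (Nat.cast_nonneg _)
    have hP0 : 0 ≤ ∑ ω ∈ univ.filter (fun ω => (H ω).Adj (a e) (b e)), p ω :=
      Finset.sum_nonneg fun ω _ => hp0 ω
    rw [← hsplit, hin, hout]
    rw [hp1] at hprob
    set P := ∑ ω ∈ univ.filter (fun ω => (H ω).Adj (a e) (b e)), p ω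
    set Q := ∑ ω ∈ univ.filter (fun ω => ¬(H ω).Adj (a e) (b e)), p ω
    have hdc : (d : ℝ) / c ≤ d := div_le_self (by linarith) hc1
    by_cases hQ : ε < Q
    · have h1 := hker' hQ
      have h2 := mul_le_mul_of_nonneg_left hdc hP0
      have h3 : (d : ℝ) / c = P * (d / c) + d / c * Q := by
        rw [mul_comm P, ← mul_add, hprob, mul_one]
      linarith
    · have h1 : 1 / c ≤ P := by linarith
      have h2 := mul_le_mul_of_nonneg_right h1 (by linarith : (0 : ℝ) ≤ d)
      have h3 : (d : ℝ) / c = 1 / c * d := by ring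
      linarith
  have hlow : (M.card : ℝ) * (d / c) ≤ ∑ e ∈ M, ∑ ω, p ω * val ω e := by
    rw [← nsmul_eq_mul]
    exact Finset.card_nsmul_le_sum _ _ _ hexp
  have hup : ∑ e ∈ M, ∑ ω, p ω * val ω e
      ≤ 2 * ((d : ℝ) + 1) * ∑ ω, p ω * (matchNum (H ω) : ℝ) := by
    rw [Finset.sum_comm, Finset.mul_sum]
    refine Finset.sum_le_sum fun ω _ => ?_
    rw [← Finset.mul_sum]
    have := mul_le_mul_of_nonneg_left (hval ω) (hp0 ω)
    linarith
  have heq : (matchNum G : ℝ) / (2 * c * (1 + 1 / (d : ℝ)))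
      = (M.card : ℝ) * (d / c) / (2 * ((d : ℝ) + 1)) := by
    rw [hMcard]
    field_simp
  rw [heq, div_le_iff₀ (by positivity)]
  linarith
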